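/- Let λ ≥ max(1, 16·c_tr) and suppose u ∈ V and u_h ∈ S satisfy the Galerkin orthogonality A_λ(u − u_h, v) = 0 for all v ∈ S. Then |||u − u_h|||_λ ≤ (5 + 4·c_tr) · |||u − v_h|||_λ for every v_h ∈ S. (Quasi-optimality of the classical symmetric Nitsche formulation for sufficiently large stabilization parameter λ, with a quasi-optimality constant independent of λ.) -/

import Mathlib

/-!
Write `e = u - vh` and `w = uh - vh ∈ S`, so that `u - uh = e - w` and Galerkin orthogonality reads
`A(w, w) = A(e, w)`. On `S` the trace inequality turns the bound on `N` into
`N(w, v)² ≤ θ² a(w, w) λ s(v, v)` as soon as `c ≤ θ² λ`. Hence `A` is coercive on `S` with constant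
`1 - θ` in the norm `m(w)² = a(w, w) + λ s(w, w)`, and four Cauchy–Schwarz inequalities give
`A(e, w) ≤ √3 |||e||| m(w)`. Together these bound `m(w)` by `√3 / (1 - θ) |||e|||`; the trace
inequality gives `|||w||| ≤ √(1 + c) m(w)`, and the triangle inequality concludes. With `θ = 1/4`
and `√x ≤ x` for `x = 3 (1 + c)` the resulting constant is exactly `5 + 4 c`.
-/

open LinearMap (BilinForm)

lemma le_sqrt_mul_sqrt_of_sq_le {x y z : ℝ} (hy : 0 ≤ y) (h : x ^ 2 ≤ y * z) : x ≤ √y * √z :=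
  (Real.le_sqrt_of_sq_le h).trans_eq (Real.sqrt_mul hy z)

section NonnegForms

variable {V : Type*} [AddCommGroup V] [Module ℝ V] {B : BilinForm ℝ V}

lemma apply_le_sqrt_mul_sqrt (hB : B.IsPosSemidef) (x y : V) :
    B x y ≤ √(B x x) * √(B y y) :=
  le_sqrt_mul_sqrt_of_sq_le (hB.nonneg x)
    (B.apply_sq_le_of_symm hB.nonneg (BilinForm.isSymm_iff.mp hB.isSymm) x y)

lemma sqrt_apply_self_sub_le (hB : B.IsNonneg) (x y : V) :
    √(B (x - y) (x - y)) ≤ √(B x x) + √(B y y) := by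
  -- Only the symmetric part of `B` enters, so Cauchy–Schwarz is applied to `B + B.flip`.
  have hsymm : (B + B.flip).IsPosSemidef :=
    { eq := fun x y ↦ add_comm (B x y) (B y x)
      nonneg := fun x ↦ add_nonneg (hB.nonneg x) (hB.nonneg x) }
  have hcross : -(B x y + B y x) ≤ 2 * (√(B x x) * √(B y y)) :=
    calc -(B x y + B y x)
        ≤ √(2 * B x x) * √(2 * B y y) := by
          simpa only [map_neg, LinearMap.add_apply, LinearMap.neg_apply, BilinForm.flip_apply,
            neg_neg, neg_add, mul_neg, ← two_mul] using apply_le_sqrt_mul_sqrt hsymm (-x) y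
      _ = 2 * (√(B x x) * √(B y y)) := by
          rw [Real.sqrt_mul zero_le_two, Real.sqrt_mul zero_le_two, mul_mul_mul_comm,
            Real.mul_self_sqrt zero_le_two]
  refine Real.sqrt_le_iff.mpr ⟨by positivity, ?_⟩
  calc B (x - y) (x - y)
      = B x x - (B x y + B y x) + B y y := by
        simp only [map_sub, LinearMap.sub_apply]
        ring
    _ ≤ √(B x x) ^ 2 + 2 * (√(B x x) * √(B y y)) + √(B y y) ^ 2 := by
        rw [Real.sq_sqrt (hB.nonneg x), Real.sq_sqrt (hB.nonneg y)]
        linarith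
    _ = (√(B x x) + √(B y y)) ^ 2 := by ring

end NonnegForms

section Nitsche

variable {V : Type*} [AddCommGroup V] [Module ℝ V]

/-- The symmetric Nitsche form `A(u, v) = a(u, v) + N(u, v) + N(v, u) + t(u, v)`. The stabilization
`t` includes the parameter, so that `A_λ` is `nitscheForm a (λ • s) N`. -/
def nitscheForm (a t N : BilinForm ℝ V) : BilinForm ℝ V := a + N + N.flip + t

/-- The Nitsche energy seminorm `|||v||| = (a(v, v) + b(v, v) + t(v, v))^(1/2)`, in which the error
is measured; as in `nitscheForm`, the stabilization `t` includes the parameter. -/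
noncomputable def nitscheNorm (a b t : BilinForm ℝ V) (v : V) : ℝ := √((a + b + t) v v)

variable {a b s t N : BilinForm ℝ V} {c lam θ : ℝ} {e w : V}

lemma nitscheForm_apply (a t N : BilinForm ℝ V) (u v : V) :
    nitscheForm a t N u v = a u v + N u v + N v u + t u v := rfl

lemma le_nitscheForm_apply_self (ha : a.IsNonneg) (ht : t.IsNonneg) (hθ : 0 ≤ θ)
    (hN : N w w ^ 2 ≤ θ ^ 2 * (a w w * t w w)) :
    (1 - θ) * (a + t) w w ≤ nitscheForm a t N w w := by
  have hsum : 0 ≤ a w w + t w w := add_nonneg (ha.nonneg w) (ht.nonneg w)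
  have hAMGM : a w w * t w w ≤ ((a w w + t w w) / 2) ^ 2 := by
    linarith [sq_nonneg (a w w - t w w)]
  have hNsq : N w w ^ 2 ≤ (θ * ((a w w + t w w) / 2)) ^ 2 := by
    rw [mul_pow]
    exact hN.trans (by gcongr)
  have hNw : -(θ * ((a w w + t w w) / 2)) ≤ N w w := (abs_le_of_sq_le_sq' hNsq (by positivity)).1
  rw [nitscheForm_apply, LinearMap.add_apply, LinearMap.add_apply]
  linarith

lemma nitscheForm_apply_le (ha : a.IsPosSemidef) (hb : b.IsNonneg) (ht : t.IsPosSemidef)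
    (hNew : N e w ^ 2 ≤ b e e * t w w) (hNwe : N w e ^ 2 ≤ a w w * t e e) :
    nitscheForm a t N e w ≤ √3 * nitscheNorm a b t e * √((a + t) w w) := by
  have hrow : ∀ α β σ : ℝ, (α + σ) ^ 2 + (β + σ) ^ 2 ≤ 3 * (α ^ 2 + β ^ 2 + σ ^ 2) :=
    fun α β σ ↦ by linarith [sq_nonneg (α - β), sq_nonneg (α + β - σ)]
  have hcs : ∀ x y p q : ℝ, (x * p + y * q) ^ 2 ≤ (x ^ 2 + y ^ 2) * (p ^ 2 + q ^ 2) :=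
    fun x y p q ↦ by linarith [sq_nonneg (x * q - y * p)]
  have hpos : 0 ≤ (a + b + t) e e := ((ha.isNonneg.add hb).add ht.isNonneg).nonneg e
  calc nitscheForm a t N e w
      ≤ √(a e e) * √(a w w) + √(b e e) * √(t w w) + √(a w w) * √(t e e)
          + √(t e e) * √(t w w) := by
        rw [nitscheForm_apply]
        gcongr
        · exact apply_le_sqrt_mul_sqrt ha e w
        · exact le_sqrt_mul_sqrt_of_sq_le (hb.nonneg e) hNew
        · exact le_sqrt_mul_sqrt_of_sq_le (ha.nonneg w) hNwe
        · exact apply_le_sqrt_mul_sqrt ht e w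
    _ = (√(a e e) + √(t e e)) * √(a w w) + (√(b e e) + √(t e e)) * √(t w w) := by ring
    _ ≤ √(3 * (a + b + t) e e) * √((a + t) w w) := by
        refine le_sqrt_mul_sqrt_of_sq_le (by positivity) ((hcs _ _ _ _).trans ?_)
        have h := hrow √(a e e) √(b e e) √(t e e)
        rw [Real.sq_sqrt (ha.nonneg e), Real.sq_sqrt (hb.nonneg e), Real.sq_sqrt (ht.nonneg e)] at h
        rw [Real.sq_sqrt (ha.nonneg w), Real.sq_sqrt (ht.nonneg w)]
        exact mul_le_mul_of_nonneg_right h (add_nonneg (ha.nonneg w) (ht.nonneg w))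
    _ = √3 * nitscheNorm a b t e * √((a + t) w w) := by
        rw [Real.sqrt_mul zero_le_three, nitscheNorm]

lemma nitscheNorm_sub_le (ha : a.IsNonneg) (hb : b.IsNonneg) (ht : t.IsNonneg) (v w : V) :
    nitscheNorm a b t (v - w) ≤ nitscheNorm a b t v + nitscheNorm a b t w :=
  sqrt_apply_self_sub_le ((ha.add hb).add ht) v w

lemma nitscheNorm_le_of_trace_le (ht : t.IsNonneg) (hc : 0 ≤ c) (hw : b w w ≤ c * a w w) :
    nitscheNorm a b t w ≤ √(1 + c) * √((a + t) w w) := by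
  rw [nitscheNorm, ← Real.sqrt_mul (by positivity)]
  refine Real.sqrt_le_sqrt ?_
  simp only [LinearMap.add_apply]
  linarith [mul_nonneg hc (ht.nonneg w)]

lemma sqrt_le_of_nitscheForm_sub_eq_zero (ha : a.IsPosSemidef) (hb : b.IsNonneg)
    (ht : t.IsPosSemidef) (hθ0 : 0 ≤ θ) (hθ1 : θ < 1) (hNew : N e w ^ 2 ≤ b e e * t w w)
    (hNw : ∀ v, N w v ^ 2 ≤ θ ^ 2 * (a w w * t v v))
    (horth : nitscheForm a t N (e - w) w = 0) :
    √((a + t) w w) ≤ √3 / (1 - θ) * nitscheNorm a b t e := by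
  set m := √((a + t) w w)
  have hNwe : N w e ^ 2 ≤ a w w * t e e :=
    (hNw e).trans <| mul_le_of_le_one_left (mul_nonneg (ha.nonneg w) (ht.nonneg e))
      (pow_le_one₀ hθ0 hθ1.le)
  have hmul : (1 - θ) * m * m ≤ √3 * nitscheNorm a b t e * m :=
    calc (1 - θ) * m * m
        = (1 - θ) * (a + t) w w := by
          rw [mul_assoc, Real.mul_self_sqrt ((ha.isNonneg.add ht.isNonneg).nonneg w)]
      _ ≤ nitscheForm a t N w w := le_nitscheForm_apply_self ha.isNonneg ht.isNonneg hθ0 (hNw w)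
      _ = nitscheForm a t N e w := by
          rw [map_sub, LinearMap.sub_apply, sub_eq_zero] at horth
          exact horth.symm
      _ ≤ √3 * nitscheNorm a b t e * m := nitscheForm_apply_le ha hb ht hNew hNwe
  rw [div_mul_eq_mul_div, le_div_iff₀ (sub_pos.mpr hθ1), mul_comm]
  obtain hm0 | hmpos : m = 0 ∨ 0 < m := (Real.sqrt_nonneg _).eq_or_lt'
  · rw [hm0, mul_zero]
    exact mul_nonneg (Real.sqrt_nonneg _) (Real.sqrt_nonneg _)
  · exact le_of_mul_le_mul_right hmul hmpos

lemma sq_apply_le_of_trace_le (ha : a.IsNonneg) (hs : s.IsNonneg) (hcθ : c ≤ θ ^ 2 * lam)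
    (hN : ∀ u v, N u v ^ 2 ≤ b u u * s v v) (hw : b w w ≤ c * a w w) (v : V) :
    N w v ^ 2 ≤ θ ^ 2 * (a w w * (lam • s) v v) := by
  have haw := ha.nonneg w
  have hsv := hs.nonneg v
  calc N w v ^ 2
      ≤ b w w * s v v := hN w v
    _ ≤ (θ ^ 2 * lam * a w w) * s v v := by
        gcongr
        exact hw.trans (by gcongr)
    _ = θ ^ 2 * (a w w * (lam • s) v v) := by
        simp only [LinearMap.smul_apply, smul_eq_mul]
        ring

/-- A suitable `θ` exists as soon as `λ > c`; choosing it uniformly in `λ` makes the constant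
independent of `λ`. -/
theorem classical_nitsche_quasi_optimality_general (S : Submodule ℝ V)
    (ha : a.IsPosSemidef) (hs : s.IsPosSemidef) (hb : b.IsNonneg)
    (hN : ∀ u v, N u v ^ 2 ≤ b u u * s v v)
    (hc : 0 ≤ c) (htrace : ∀ v ∈ S, b v v ≤ c * a v v)
    (hθ0 : 0 ≤ θ) (hθ1 : θ < 1) (hlam : 1 ≤ lam) (hcθ : c ≤ θ ^ 2 * lam)
    {u uh vh : V} (huh : uh ∈ S) (hvh : vh ∈ S)
    (hgal : ∀ v ∈ S, nitscheForm a (lam • s) N (u - uh) v = 0) :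
    nitscheNorm a b (lam • s) (u - uh) ≤
      (1 + √(3 * (1 + c)) / (1 - θ)) * nitscheNorm a b (lam • s) (u - vh) := by
  have ht : (lam • s).IsPosSemidef := hs.smul (zero_le_one.trans hlam)
  have hwS : uh - vh ∈ S := S.sub_mem huh hvh
  have herr : u - uh = (u - vh) - (uh - vh) := (sub_sub_sub_cancel_right u uh vh).symm
  have horth := hgal _ hwS
  rw [herr] at horth ⊢
  generalize u - vh = e, uh - vh = w at *
  have hNew : N e w ^ 2 ≤ b e e * (lam • s) w w :=
    (hN e w).trans <| mul_le_mul_of_nonneg_left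
      (le_mul_of_one_le_left (hs.nonneg w) hlam) (hb.nonneg e)
  have hNw := sq_apply_le_of_trace_le ha.isNonneg hs.isNonneg hcθ hN (htrace w hwS)
  calc nitscheNorm a b (lam • s) (e - w)
      ≤ nitscheNorm a b (lam • s) e + nitscheNorm a b (lam • s) w :=
        nitscheNorm_sub_le ha.isNonneg hb ht.isNonneg e w
    _ ≤ nitscheNorm a b (lam • s) e + √(1 + c) * √((a + lam • s) w w) := by
        gcongr
        exact nitscheNorm_le_of_trace_le ht.isNonneg hc (htrace w hwS)
    _ ≤ nitscheNorm a b (lam • s) e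
          + √(1 + c) * (√3 / (1 - θ) * nitscheNorm a b (lam • s) e) := by
        gcongr
        exact sqrt_le_of_nitscheForm_sub_eq_zero ha hb ht hθ0 hθ1 hNew hNw horth
    _ = (1 + √(3 * (1 + c)) / (1 - θ)) * nitscheNorm a b (lam • s) e := by
        rw [Real.sqrt_mul zero_le_three]
        ring

lemma one_add_sqrt_div_le_five_add_four_mul (hc : 0 ≤ c) :
    1 + √(3 * (1 + c)) / (1 - 1 / 4) ≤ 5 + 4 * c := by
  have h : √(3 * (1 + c)) ≤ 3 * (1 + c) := Real.sqrt_le_self_iff.mpr (Or.inr (by linarith))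
  calc 1 + √(3 * (1 + c)) / (1 - 1 / 4)
      ≤ 1 + 3 * (1 + c) / (1 - 1 / 4) := by
        gcongr
    _ = 5 + 4 * c := by ring

end Nitsche

/-- Quasi-optimality of the classical symmetric Nitsche formulation for
sufficiently large stabilization parameter `λ ≥ max(1, 16·c_tr)`:
`|||u − u_h|||_λ ≤ (5 + 4·c_tr) · |||u − v_h|||_λ`, with a quasi-optimality
constant independent of `λ`. -/
theorem classical_nitsche_quasi_optimality
    {V : Type*} [AddCommGroup V] [Module ℝ V]
    (S : Submodule ℝ V)
    (a s b : V →ₗ[ℝ] V →ₗ[ℝ] ℝ)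
    (hasymm : ∀ u v : V, a u v = a v u) (hapos : ∀ u : V, 0 ≤ a u u)
    (hssymm : ∀ u v : V, s u v = s v u) (hspos : ∀ u : V, 0 ≤ s u u)
    (hbsymm : ∀ u v : V, b u v = b v u) (hbpos : ∀ u : V, 0 ≤ b u u)
    (Nc : V →ₗ[ℝ] V →ₗ[ℝ] ℝ)
    (ctr : ℝ) (hctr : 0 < ctr)
    (hNcbound : ∀ u v : V, (Nc u v) ^ 2 ≤ b u u * s v v)
    (htrace : ∀ v ∈ S, b v v ≤ ctr * a v v)
    (lam : ℝ) (hlam : max 1 (16 * ctr) ≤ lam)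
    (Alam : V → V → ℝ)
    (hAlam : ∀ u v : V, Alam u v = a u v + Nc u v + Nc v u + lam * s u v)
    (u uh : V) (huh : uh ∈ S)
    (hgal : ∀ v ∈ S, Alam (u - uh) v = 0)
    (vh : V) (hvh : vh ∈ S) :
    Real.sqrt (a (u - uh) (u - uh) + b (u - uh) (u - uh) +
        lam * s (u - uh) (u - uh))
      ≤ (5 + 4 * ctr) *
        Real.sqrt (a (u - vh) (u - vh) + b (u - vh) (u - vh) +
          lam * s (u - vh) (u - vh)) := by
  have hlam1 : 1 ≤ lam := (le_max_left _ _).trans hlam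
  have hcθ : ctr ≤ (1 / 4) ^ 2 * lam := by linarith [(le_max_right _ _).trans hlam]
  have hbound := classical_nitsche_quasi_optimality_general S
    (a := a) (s := s) (b := b) (N := Nc) (θ := 1 / 4)
    { eq := hasymm, nonneg := hapos } { eq := hssymm, nonneg := hspos } ⟨hbpos⟩ hNcbound hctr.le
    htrace (by norm_num) (by norm_num) hlam1 hcθ huh hvh
    (fun v hv ↦ (hAlam (u - uh) v).symm.trans (hgal v hv))
  exact hbound.trans <|
    mul_le_mul_of_nonneg_right (one_add_sqrt_div_le_five_add_four_mul hctr.le) (Real.sqrt_nonneg _)
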